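/- Let n ≥ 2, α ∈ (0,1], C > 0, a_1,…,a_n > 0 with a_1 + ⋯ + a_n = 1, and let q_α(x) = C(a_1 x_1^α + ⋯ + a_n x_n^α)^{1/α} on ℝ^n_+. Then for every z = (z_1,…,z_n) ∈ ℂ^n with Re z ∈ ℝ^n_+, writing s = z_1 + ⋯ + z_n, one has (M e^{−q_α})(z) = Γ(s) / (α^{n−1} C^s Γ(s/α)) · ∏_{j=1}^n a_j^{−z_j/α} Γ(z_j/α), where Γ is the Gamma function. In particular, (M e^{−q_α})(z) ≠ 0 for all z with Re z ∈ ℝ^n_+. -/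

import Mathlib

open MeasureTheory Complex Set

noncomputable section

/-- The positive orthant `ℝ^n_+`. -/
def posOrth (n : ℕ) : Set (Fin n → ℝ) := {x | ∀ i, 0 < x i}

/-- The `n`-dimensional Mellin transform `(Mg)(z) = ∫_{ℝ^n_+} x^{z-I} g(x) dx`. -/
def mellinT (n : ℕ) (g : (Fin n → ℝ) → ℝ) (z : Fin n → ℂ) : ℂ :=
  ∫ x in posOrth n, (∏ i, (x i : ℂ) ^ (z i - 1)) * g x

/-- The CES unit cost function `q_α(x) = C (a₁x₁^α + ⋯ + aₙxₙ^α)^{1/α}`. -/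
def cesCost (n : ℕ) (α C : ℝ) (a : Fin n → ℝ) (x : Fin n → ℝ) : ℝ :=
  C * (∑ i, a i * x i ^ α) ^ (1 / α)

/-!
For fixed `z` and `s = ∑ zᵢ`, the weight `∏ xᵢ ^ (zᵢ - 1)` is homogeneous of degree `s - n` on the
orthant. If `q` is positive and homogeneous of degree one, then the Mellin transform of `φ ∘ q` at
`z` is the one-dimensional Mellin transform of `φ` at `s`, times a factor that depends on `q` and
`z` but not on the profile `φ`. That factor is eliminated by comparing two profiles. For
`q = (∑ aᵢ xᵢ ^ α) ^ (1 / α)` the profile `exp (-C t)` gives the transform to be computed, while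
`exp (-t ^ α)` gives `∏ exp (-aᵢ xᵢ ^ α)`, whose transform is a product of Gamma integrals.
-/

section Cone

open Module
open scoped Pointwise

theorem integrable_mul_comp_mul_prod_Ioi {X : Type*} [MeasurableSpace X] {μ : Measure X}
    {f : X → ℂ} {b : X → ℝ} {g : ℝ → ℂ} (hf : Integrable f μ) (hb : Measurable b)
    (hb_pos : ∀ᵐ x ∂μ, 0 < b x) (hg : Measurable g) (hg_int : IntegrableOn g (Ioi 0)) :
    Integrable (Function.uncurry fun x t => f x * (b x * g (b x * t)))
      (μ.prod (volume.restrict (Ioi 0))) := by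
  have h_meas : AEStronglyMeasurable (Function.uncurry fun x t => f x * (b x * g (b x * t)))
      (μ.prod (volume.restrict (Ioi 0))) :=
    hf.aestronglyMeasurable.comp_fst.mul (Measurable.aestronglyMeasurable (by fun_prop))
  refine (integrable_prod_iff h_meas).2 ⟨?_, ?_⟩
  · filter_upwards [hb_pos] with x hx
    have h_scaled : IntegrableOn (fun t => g (b x * t)) (Ioi 0) := by
      rwa [integrableOn_Ioi_comp_mul_left_iff g 0 hx, mul_zero]
    exact (h_scaled.const_mul (b x : ℂ)).const_mul (f x)
  · refine (hf.norm.mul_const (∫ t in Ioi (0 : ℝ), ‖g t‖)).congr ?_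
    filter_upwards [hb_pos] with x hx
    have h_scale := integral_comp_mul_left_Ioi' (fun t => ‖g t‖) 0 hx
    rw [mul_zero, smul_eq_mul] at h_scale
    simp only [Function.uncurry, norm_mul, norm_real, Real.norm_of_nonneg hx.le,
      integral_const_mul, h_scale]

theorem integral_Ioi_integral_mul_comp_mul {X : Type*} [MeasurableSpace X] {μ : Measure X}
    [SFinite μ] {f : X → ℂ} {b : X → ℝ} {g : ℝ → ℂ} (hf : Integrable f μ) (hb : Measurable b)
    (hb_pos : ∀ᵐ x ∂μ, 0 < b x) (hg : Measurable g) (hg_int : IntegrableOn g (Ioi 0)) :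
    ∫ t in Ioi (0 : ℝ), ∫ x, f x * (b x * g (b x * t)) ∂μ
      = (∫ x, f x ∂μ) * ∫ t in Ioi (0 : ℝ), g t := by
  rw [← integral_integral_swap (integrable_mul_comp_mul_prod_Ioi hf hb hb_pos hg hg_int),
    ← integral_mul_const]
  refine integral_congr_ae ?_
  filter_upwards [hb_pos] with x hx
  have h_scale := integral_comp_mul_left_Ioi' g 0 hx
  rw [mul_zero, real_smul] at h_scale
  rw [integral_const_mul, integral_const_mul, h_scale]

theorem integral_Ioi_inv_sq_smul_comp_inv {F : Type*} [NormedAddCommGroup F] [NormedSpace ℝ F]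
    (f : ℝ → F) : ∫ t in Ioi (0 : ℝ), (t ^ 2)⁻¹ • f t⁻¹ = ∫ t in Ioi (0 : ℝ), f t := by
  rw [← integral_comp_rpow_Ioi f (neg_ne_zero.2 one_ne_zero)]
  refine setIntegral_congr_fun measurableSet_Ioi fun t (ht : 0 < t) => ?_
  have h_exp : t ^ (-1 - 1 : ℝ) = (t ^ 2)⁻¹ := by
    rw [← Real.rpow_natCast, ← Real.rpow_neg ht.le]
    norm_num
  simp only [h_exp, Real.rpow_neg_one, abs_neg, abs_one, one_mul]

variable {E : Type*} [NormedAddCommGroup E] [NormedSpace ℝ E] [FiniteDimensional ℝ E]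
  [MeasurableSpace E] [BorelSpace E] (μ : Measure E) [μ.IsAddHaarMeasure]
  {K : Set E} {W : E → ℂ} {q : E → ℝ}

-- `hW` says that `W` is homogeneous of degree `1 - dim E`, so that `W x dx` has degree one.
theorem setIntegral_mul_comp_mul_eq_inv_sq_smul (hK : MeasurableSet K)
    (hK_smul : ∀ t : ℝ, 0 < t → t • K = K)
    (hW : ∀ t : ℝ, 0 < t → ∀ x ∈ K, (t : ℂ) ^ finrank ℝ E * W (t • x) = t * W x)
    (hq : ∀ t : ℝ, 0 < t → ∀ x ∈ K, q (t • x) = t * q x) (φ ψ : ℝ → ℂ) {t : ℝ} (ht : 0 < t) :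
    ∫ x in K, W x * φ (q x) * (q x * ψ (q x * t)) ∂μ
      = (t ^ 2)⁻¹ • ∫ x in K, W x * ψ (q x) * (q x * φ (q x * t⁻¹)) ∂μ := by
  have ht' : (t : ℂ) ≠ 0 := ofReal_ne_zero.2 ht.ne'
  have h_subst := Measure.setIntegral_comp_smul_of_pos μ
    (fun x => W x * ψ (q x) * (q x * φ (q x * t⁻¹))) K ht
  rw [hK_smul t ht, eq_inv_smul_iff₀ (by positivity)] at h_subst
  rw [← h_subst, ← integral_smul, ← integral_smul]
  refine setIntegral_congr_fun hK fun x hx => ?_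
  have h_cancel : t * q x * t⁻¹ = q x := by field_simp
  simp only [hq t ht x hx, h_cancel, real_smul]
  push_cast
  rw [mul_comm (t : ℝ) (q x)]
  field_simp
  linear_combination (-(q x : ℂ) * φ (q x) * ψ (q x * t)) * hW t ht x hx

theorem setIntegral_mul_comp_mul_integral_comm (hK : MeasurableSet K)
    (hK_smul : ∀ t : ℝ, 0 < t → t • K = K)
    (hW : ∀ t : ℝ, 0 < t → ∀ x ∈ K, (t : ℂ) ^ finrank ℝ E * W (t • x) = t * W x)
    (hq_meas : Measurable q) (hq_pos : ∀ x ∈ K, 0 < q x)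
    (hq : ∀ t : ℝ, 0 < t → ∀ x ∈ K, q (t • x) = t * q x) {φ ψ : ℝ → ℂ}
    (hφ : Measurable φ) (hψ : Measurable ψ)
    (hφ_int : IntegrableOn φ (Ioi 0)) (hψ_int : IntegrableOn ψ (Ioi 0))
    (hWφ : IntegrableOn (fun x => W x * φ (q x)) K μ)
    (hWψ : IntegrableOn (fun x => W x * ψ (q x)) K μ) :
    (∫ x in K, W x * φ (q x) ∂μ) * ∫ t in Ioi (0 : ℝ), ψ t
      = (∫ x in K, W x * ψ (q x) ∂μ) * ∫ t in Ioi (0 : ℝ), φ t := by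
  have hq_pos' : ∀ᵐ x ∂μ.restrict K, 0 < q x := (ae_restrict_mem hK).mono hq_pos
  -- The substitutions `t ↦ q(x) t`, then `x ↦ x / t`, then `t ↦ 1 / t` exchange `φ` and `ψ`.
  calc
    _ = ∫ t in Ioi (0 : ℝ), ∫ x in K, W x * φ (q x) * (q x * ψ (q x * t)) ∂μ :=
      (integral_Ioi_integral_mul_comp_mul hWφ hq_meas hq_pos' hψ hψ_int).symm
    _ = ∫ t in Ioi (0 : ℝ), (t ^ 2)⁻¹ • ∫ x in K, W x * ψ (q x) * (q x * φ (q x * t⁻¹)) ∂μ :=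
      setIntegral_congr_fun measurableSet_Ioi fun t ht =>
        setIntegral_mul_comp_mul_eq_inv_sq_smul μ hK hK_smul hW hq φ ψ ht
    _ = ∫ t in Ioi (0 : ℝ), ∫ x in K, W x * ψ (q x) * (q x * φ (q x * t)) ∂μ :=
      integral_Ioi_inv_sq_smul_comp_inv
        fun t => ∫ x in K, W x * ψ (q x) * (q x * φ (q x * t)) ∂μ
    _ = _ := integral_Ioi_integral_mul_comp_mul hWψ hq_meas hq_pos' hφ hφ_int

end Cone

theorem hasMellin_exp_neg {s : ℂ} (hs : 0 < s.re) :
    HasMellin (fun t : ℝ => (Real.exp (-t) : ℂ)) s (Gamma s) := by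
  refine ⟨?_, by rw [Gamma_eq_integral hs, GammaIntegral_eq_mellin]⟩
  simpa only [MellinConvergent, smul_eq_mul, mul_comm] using GammaIntegral_convergent hs

theorem hasMellin_exp_neg_mul_rpow {b p : ℝ} {s : ℂ} (hb : 0 < b) (hp : 0 < p) (hs : 0 < s.re) :
    HasMellin (fun t : ℝ => (Real.exp (-(b * t ^ p)) : ℂ)) s
      ((p : ℂ)⁻¹ * ((b : ℂ) ^ (-s / p) * Gamma (s / p))) := by
  have hsp : 0 < (s / p).re := by rw [div_ofReal_re]; positivity
  obtain ⟨h_conv, h_eq⟩ := hasMellin_exp_neg hsp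
  constructor
  · exact (MellinConvergent.comp_rpow (f := fun u : ℝ => (Real.exp (-(b * u)) : ℂ)) hp.ne').2
      ((MellinConvergent.comp_mul_left (f := fun u : ℝ => (Real.exp (-u) : ℂ)) hb).2 h_conv)
  · rw [mellin_comp_rpow (fun u : ℝ => (Real.exp (-(b * u)) : ℂ)),
      mellin_comp_mul_left (fun u : ℝ => (Real.exp (-u) : ℂ)) _ hb, h_eq, abs_of_pos hp,
      real_smul, smul_eq_mul, ofReal_inv, neg_div]

theorem prod_ofReal_smul_cpow {ι : Type*} [Fintype ι] (w : ι → ℂ) {x : ι → ℝ}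
    (hx : ∀ i, 0 ≤ x i) {t : ℝ} (ht : 0 < t) :
    ∏ i, (((t • x) i : ℝ) : ℂ) ^ w i = (t : ℂ) ^ (∑ i, w i) * ∏ i, (x i : ℂ) ^ w i := by
  have h_pow_sum : (t : ℂ) ^ (∑ i, w i) = ∏ i, (t : ℂ) ^ w i := by
    simp only [cpow_def_of_ne_zero (ofReal_ne_zero.2 ht.ne'), ← exp_sum, Finset.mul_sum]
  rw [h_pow_sum, ← Finset.prod_mul_distrib]
  refine Finset.prod_congr rfl fun i _ => ?_
  rw [Pi.smul_apply, smul_eq_mul, ofReal_mul, mul_cpow_ofReal_nonneg ht.le (hx i)]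

theorem pow_card_mul_prod_smul_cpow_mul_cpow {ι : Type*} [Fintype ι] (z : ι → ℂ) {x : ι → ℝ}
    (hx : ∀ i, 0 ≤ x i) {r : ℝ} (hr : 0 ≤ r) {t : ℝ} (ht : 0 < t) :
    (t : ℂ) ^ Fintype.card ι
        * ((∏ i, (((t • x) i : ℝ) : ℂ) ^ (z i - 1)) * ((t * r : ℝ) : ℂ) ^ (1 - ∑ i, z i))
      = t * ((∏ i, (x i : ℂ) ^ (z i - 1)) * (r : ℂ) ^ (1 - ∑ i, z i)) := by
  have ht' : (t : ℂ) ≠ 0 := ofReal_ne_zero.2 ht.ne'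
  have h_degree : (t : ℂ) ^ Fintype.card ι
      * ((t : ℂ) ^ (∑ i, (z i - 1)) * (t : ℂ) ^ (1 - ∑ i, z i)) = t := by
    rw [← cpow_natCast, ← cpow_add _ _ ht', ← cpow_add _ _ ht']
    simp
  rw [prod_ofReal_smul_cpow _ hx ht, ofReal_mul, mul_cpow_ofReal_nonneg ht.le hr]
  linear_combination ((∏ i, (x i : ℂ) ^ (z i - 1)) * (r : ℂ) ^ (1 - ∑ i, z i)) * h_degree

theorem re_sum_pos {ι : Type*} [Fintype ι] [Nonempty ι] {z : ι → ℂ} (hz : ∀ i, 0 < (z i).re) :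
    0 < (∑ i, z i).re := by
  rw [re_sum]
  exact Finset.sum_pos (fun i _ => hz i) Finset.univ_nonempty

theorem sum_mul_rpow_nonneg {ι : Type*} [Fintype ι] {a x : ι → ℝ} (ha : ∀ i, 0 ≤ a i)
    (hx : ∀ i, 0 ≤ x i) (p : ℝ) : 0 ≤ ∑ i, a i * x i ^ p :=
  Finset.sum_nonneg fun i _ => mul_nonneg (ha i) (Real.rpow_nonneg (hx i) p)

theorem exp_neg_sum_eq_prod {ι : Type*} [Fintype ι] (f : ι → ℝ) :
    Real.exp (-∑ i, f i) = ∏ i, Real.exp (-f i) := by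
  rw [← Finset.sum_neg_distrib, Real.exp_sum]

section Orthant

variable {n : ℕ}

theorem posOrth_eq_pi : posOrth n = univ.pi fun _ => Ioi (0 : ℝ) := by
  ext x
  simp [posOrth]

theorem measurableSet_posOrth : MeasurableSet (posOrth n) := by
  rw [posOrth_eq_pi]
  exact MeasurableSet.univ_pi fun _ => measurableSet_Ioi

theorem volume_restrict_posOrth :
    (volume : Measure (Fin n → ℝ)).restrict (posOrth n)
      = Measure.pi fun _ => volume.restrict (Ioi (0 : ℝ)) := by
  rw [posOrth_eq_pi, volume_pi, Measure.restrict_pi_pi]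

open scoped Pointwise in
theorem smul_posOrth {t : ℝ} (ht : 0 < t) : t • posOrth n = posOrth n := by
  ext x
  simp [mem_smul_set_iff_inv_smul_mem₀ ht.ne', posOrth, ht]

/-- Absolute convergence of the integral defining `mellinT n g z`; without it `mellinT n g z` is
the junk value `0`. -/
def MellinTConvergent (n : ℕ) (g : (Fin n → ℝ) → ℝ) (z : Fin n → ℂ) : Prop :=
  IntegrableOn (fun x => (∏ i, (x i : ℂ) ^ (z i - 1)) * g x) (posOrth n)

theorem MellinTConvergent.mono {f g : (Fin n → ℝ) → ℝ} {z : Fin n → ℂ}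
    (hf : MellinTConvergent n f z) (hg : Measurable g) (hgf : ∀ x ∈ posOrth n, |g x| ≤ |f x|) :
    MellinTConvergent n g z := by
  refine Integrable.mono hf (Measurable.aestronglyMeasurable (by fun_prop)) ?_
  filter_upwards [ae_restrict_mem measurableSet_posOrth] with x hx
  simp only [norm_mul, norm_real, Real.norm_eq_abs]
  exact mul_le_mul_of_nonneg_left (hgf x hx) (norm_nonneg _)

theorem MellinTConvergent.congr {f g : (Fin n → ℝ) → ℝ} {z : Fin n → ℂ}
    (hf : MellinTConvergent n f z) (hfg : EqOn f g (posOrth n)) : MellinTConvergent n g z :=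
  IntegrableOn.congr_fun hf (fun x hx => by simp only [hfg hx]) measurableSet_posOrth

theorem mellinT_congr {f g : (Fin n → ℝ) → ℝ} (hfg : EqOn f g (posOrth n)) (z : Fin n → ℂ) :
    mellinT n f z = mellinT n g z :=
  setIntegral_congr_fun measurableSet_posOrth fun x hx => by simp only [hfg hx]

theorem mellinTConvergent_prod {f : Fin n → ℝ → ℝ} {z : Fin n → ℂ}
    (hf : ∀ i, MellinConvergent (fun t => (f i t : ℂ)) (z i)) :
    MellinTConvergent n (fun x => ∏ i, f i (x i)) z := by
  simp only [MellinTConvergent, IntegrableOn, volume_restrict_posOrth, ofReal_prod,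
    ← Finset.prod_mul_distrib]
  exact Integrable.fintype_prod (f := fun i (t : ℝ) => (t : ℂ) ^ (z i - 1) * f i t) hf

theorem mellinT_prod (f : Fin n → ℝ → ℝ) (z : Fin n → ℂ) :
    mellinT n (fun x => ∏ i, f i (x i)) z = ∏ i, mellin (fun t => (f i t : ℂ)) (z i) := by
  simp only [mellinT, mellin, volume_restrict_posOrth, ofReal_prod, ← Finset.prod_mul_distrib,
    smul_eq_mul]
  exact integral_fintype_prod_eq_prod fun i (t : ℝ) => (t : ℂ) ^ (z i - 1) * f i t

theorem mellinT_comp_mul_mellin_comm {q : (Fin n → ℝ) → ℝ} {φ ψ : ℝ → ℝ} {z : Fin n → ℂ}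
    (hq_meas : Measurable q) (hq_pos : ∀ x ∈ posOrth n, 0 < q x)
    (hq : ∀ t : ℝ, 0 < t → ∀ x ∈ posOrth n, q (t • x) = t * q x)
    (hφ : Measurable φ) (hψ : Measurable ψ)
    (hφ_conv : MellinConvergent (fun t => (φ t : ℂ)) (∑ i, z i))
    (hψ_conv : MellinConvergent (fun t => (ψ t : ℂ)) (∑ i, z i))
    (hφq : MellinTConvergent n (fun x => φ (q x)) z)
    (hψq : MellinTConvergent n (fun x => ψ (q x)) z) :
    mellinT n (fun x => φ (q x)) z * mellin (fun t => (ψ t : ℂ)) (∑ i, z i)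
      = mellinT n (fun x => ψ (q x)) z * mellin (fun t => (φ t : ℂ)) (∑ i, z i) := by
  set s := ∑ i, z i
  -- Moving the factor `q ^ (s - 1)` into the profiles reduces to a weight of degree `1 - n`.
  let W : (Fin n → ℝ) → ℂ := fun x => (∏ i, (x i : ℂ) ^ (z i - 1)) * (q x : ℂ) ^ (1 - s)
  have hW : ∀ t : ℝ, 0 < t → ∀ x ∈ posOrth n,
      (t : ℂ) ^ Module.finrank ℝ (Fin n → ℝ) * W (t • x) = t * W x := by
    intro t ht x hx
    simpa only [W, hq t ht x hx, Module.finrank_fin_fun, Fintype.card_fin] using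
      pow_card_mul_prod_smul_cpow_mul_cpow z (fun i => (hx i).le) (hq_pos x hx).le ht
  have h_weight : ∀ η : ℝ → ℝ, EqOn (fun x => (∏ i, (x i : ℂ) ^ (z i - 1)) * η (q x))
      (fun x => W x * ((q x : ℂ) ^ (s - 1) * η (q x))) (posOrth n) := by
    intro η x hx
    have h_cancel : (q x : ℂ) ^ (1 - s) * (q x : ℂ) ^ (s - 1) = 1 := by
      rw [← cpow_add _ _ (ofReal_ne_zero.2 (hq_pos x hx).ne'), sub_add_sub_cancel, sub_self,
        cpow_zero]
    linear_combination (-(∏ i, (x i : ℂ) ^ (z i - 1)) * η (q x)) * h_cancel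
  have hm := measurableSet_posOrth (n := n)
  rw [mellinT, mellinT, setIntegral_congr_fun hm (h_weight φ),
    setIntegral_congr_fun hm (h_weight ψ)]
  exact setIntegral_mul_comp_mul_integral_comm volume hm (fun t ht => smul_posOrth ht) hW hq_meas
    hq_pos hq (φ := fun t => (t : ℂ) ^ (s - 1) * φ t) (ψ := fun t => (t : ℂ) ^ (s - 1) * ψ t)
    (by fun_prop) (by fun_prop) hφ_conv hψ_conv (hφq.congr_fun (h_weight φ) hm)
    (hψq.congr_fun (h_weight ψ) hm)

end Orthant

section CES

variable {n : ℕ} {α C : ℝ} {a : Fin n → ℝ} {z : Fin n → ℂ}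

theorem measurable_cesCost : Measurable (cesCost n α C a) := by
  unfold cesCost
  fun_prop

theorem cesCost_eq_mul_cesCost_one (x : Fin n → ℝ) :
    cesCost n α C a x = C * cesCost n α 1 a x := by
  simp only [cesCost, one_mul]

theorem cesCost_pos [NeZero n] (hC : 0 < C) (ha : ∀ i, 0 < a i) {x : Fin n → ℝ}
    (hx : x ∈ posOrth n) : 0 < cesCost n α C a x :=
  mul_pos hC <| Real.rpow_pos_of_pos
    (Finset.sum_pos (fun i _ => mul_pos (ha i) (Real.rpow_pos_of_pos (hx i) α))
      Finset.univ_nonempty) _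

theorem cesCost_smul (hα : α ≠ 0) (ha : ∀ i, 0 ≤ a i) {x : Fin n → ℝ} (hx : ∀ i, 0 ≤ x i)
    {t : ℝ} (ht : 0 ≤ t) : cesCost n α C a (t • x) = t * cesCost n α C a x := by
  have h_sum : ∑ i, a i * (t • x) i ^ α = t ^ α * ∑ i, a i * x i ^ α := by
    rw [Finset.mul_sum]
    refine Finset.sum_congr rfl fun i _ => ?_
    rw [Pi.smul_apply, smul_eq_mul, Real.mul_rpow ht (hx i), mul_left_comm]
  rw [cesCost, h_sum, Real.mul_rpow (Real.rpow_nonneg ht α) (sum_mul_rpow_nonneg ha hx α),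
    ← Real.rpow_mul ht, mul_one_div_cancel hα, Real.rpow_one, cesCost, mul_left_comm]

theorem cesCost_one_rpow (hα : α ≠ 0) (ha : ∀ i, 0 ≤ a i) {x : Fin n → ℝ} (hx : ∀ i, 0 ≤ x i) :
    cesCost n α 1 a x ^ α = ∑ i, a i * x i ^ α := by
  rw [cesCost, one_mul, ← Real.rpow_mul (sum_mul_rpow_nonneg ha hx α), one_div_mul_cancel hα,
    Real.rpow_one]

theorem mul_rpow_mul_le_cesCost (hα : 0 < α) (hC : 0 ≤ C) (ha : ∀ i, 0 ≤ a i) {x : Fin n → ℝ}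
    (hx : ∀ i, 0 ≤ x i) (i : Fin n) : C * (a i ^ (1 / α) * x i) ≤ cesCost n α C a x := by
  have h_term_nonneg (j : Fin n) : 0 ≤ a j * x j ^ α :=
    mul_nonneg (ha j) (Real.rpow_nonneg (hx j) α)
  refine mul_le_mul_of_nonneg_left ?_ hC
  calc
    a i ^ (1 / α) * x i = (a i * x i ^ α) ^ (1 / α) := by
      rw [Real.mul_rpow (ha i) (Real.rpow_nonneg (hx i) α), ← Real.rpow_mul (hx i),
        mul_one_div_cancel hα.ne', Real.rpow_one]
    _ ≤ (∑ j, a j * x j ^ α) ^ (1 / α) :=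
      Real.rpow_le_rpow (h_term_nonneg i)
        (Finset.single_le_sum (fun j _ => h_term_nonneg j) (Finset.mem_univ i)) (by positivity)

theorem sum_mul_le_cesCost [NeZero n] (hα : 0 < α) (hC : 0 ≤ C) (ha : ∀ i, 0 ≤ a i)
    {x : Fin n → ℝ} (hx : ∀ i, 0 ≤ x i) :
    ∑ i, C * a i ^ (1 / α) / n * x i ≤ cesCost n α C a x := by
  have hn : (0 : ℝ) < n := Nat.cast_pos.2 (NeZero.pos n)
  calc
    ∑ i, C * a i ^ (1 / α) / n * x i ≤ ∑ _i : Fin n, cesCost n α C a x / n := by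
      refine Finset.sum_le_sum fun i _ => ?_
      rw [div_mul_eq_mul_div, mul_assoc]
      exact div_le_div_of_nonneg_right (mul_rpow_mul_le_cesCost hα hC ha hx i) hn.le
    _ = cesCost n α C a x := by
      rw [Finset.sum_const, Finset.card_univ, Fintype.card_fin, nsmul_eq_mul,
        mul_div_cancel₀ _ hn.ne']

theorem mellinTConvergent_exp_neg_sum {c : Fin n → ℝ} {p : ℝ} (hc : ∀ i, 0 < c i) (hp : 0 < p)
    (hz : ∀ i, 0 < (z i).re) :
    MellinTConvergent n (fun x => Real.exp (-∑ i, c i * x i ^ p)) z := by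
  simp only [exp_neg_sum_eq_prod]
  exact mellinTConvergent_prod (f := fun i t => Real.exp (-(c i * t ^ p)))
    fun i => (hasMellin_exp_neg_mul_rpow (hc i) hp (hz i)).1

theorem mellinT_exp_neg_sum {c : Fin n → ℝ} {p : ℝ} (hc : ∀ i, 0 < c i) (hp : 0 < p)
    (hz : ∀ i, 0 < (z i).re) :
    mellinT n (fun x => Real.exp (-∑ i, c i * x i ^ p)) z
      = (p : ℂ)⁻¹ ^ n * ∏ i, (c i : ℂ) ^ (-z i / p) * Gamma (z i / p) := by
  simp only [exp_neg_sum_eq_prod]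
  rw [mellinT_prod (fun i t => Real.exp (-(c i * t ^ p))),
    Finset.prod_congr rfl fun i _ => (hasMellin_exp_neg_mul_rpow (hc i) hp (hz i)).2,
    Finset.prod_mul_distrib, Finset.prod_const, Finset.card_univ, Fintype.card_fin]

theorem mellinTConvergent_exp_neg_cesCost [NeZero n] (hα : 0 < α) (hC : 0 < C)
    (ha : ∀ i, 0 < a i) (hz : ∀ i, 0 < (z i).re) :
    MellinTConvergent n (fun x => Real.exp (-cesCost n α C a x)) z := by
  have hc (i : Fin n) : 0 < C * a i ^ (1 / α) / n :=
    div_pos (mul_pos hC (Real.rpow_pos_of_pos (ha i) _)) (Nat.cast_pos.2 (NeZero.pos n))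
  refine MellinTConvergent.mono (mellinTConvergent_exp_neg_sum hc one_pos hz)
    measurable_cesCost.neg.exp fun x hx => ?_
  simp only [Real.abs_exp, Real.rpow_one, Real.exp_le_exp, neg_le_neg_iff]
  exact sum_mul_le_cesCost hα hC.le (fun i => (ha i).le) fun i => (hx i).le

theorem mellinT_exp_neg_cesCost_mul_Gamma [NeZero n] (hα : 0 < α) (hC : 0 < C)
    (ha : ∀ i, 0 < a i) (hz : ∀ i, 0 < (z i).re) :
    mellinT n (fun x => Real.exp (-cesCost n α C a x)) z
        * ((α : ℂ)⁻¹ * Gamma ((∑ i, z i) / α))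
      = (α : ℂ)⁻¹ ^ n * (∏ i, (a i : ℂ) ^ (-z i / α) * Gamma (z i / α))
        * ((C : ℂ) ^ (-∑ i, z i) * Gamma (∑ i, z i)) := by
  have ha' (i : Fin n) : 0 ≤ a i := (ha i).le
  have hs : 0 < (∑ i, z i).re := re_sum_pos hz
  have h_linear : HasMellin (fun t : ℝ => (Real.exp (-(C * t)) : ℂ)) (∑ i, z i)
      ((C : ℂ) ^ (-∑ i, z i) * Gamma (∑ i, z i)) := by
    simpa using hasMellin_exp_neg_mul_rpow hC one_pos hs
  have h_power : HasMellin (fun t : ℝ => (Real.exp (-t ^ α) : ℂ)) (∑ i, z i)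
      ((α : ℂ)⁻¹ * Gamma ((∑ i, z i) / α)) := by
    simpa using hasMellin_exp_neg_mul_rpow one_pos hα hs
  have h_sum : EqOn (fun x => Real.exp (-∑ i, a i * x i ^ α))
      (fun x => Real.exp (-cesCost n α 1 a x ^ α)) (posOrth n) := fun x hx => by
    simp only [cesCost_one_rpow hα.ne' ha' fun i => (hx i).le]
  have h_conv := mellinTConvergent_exp_neg_cesCost hα hC ha hz
  simp only [cesCost_eq_mul_cesCost_one (C := C)] at h_conv ⊢
  rw [← mellinT_exp_neg_sum ha hα hz, mellinT_congr h_sum, ← h_linear.2, ← h_power.2]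
  exact mellinT_comp_mul_mellin_comm (φ := fun t => Real.exp (-(C * t)))
    (ψ := fun t => Real.exp (-t ^ α)) measurable_cesCost (fun x hx => cesCost_pos one_pos ha hx)
    (fun t ht x hx => cesCost_smul hα.ne' ha' (fun i => (hx i).le) ht.le)
    (by fun_prop) (by fun_prop) h_linear.1 h_power.1 h_conv
    ((mellinTConvergent_exp_neg_sum ha hα hz).congr h_sum)

end CES

theorem mellin_ces_eq_general (n : ℕ) (hn : n ≠ 0) (α : ℝ) (hα : 0 < α) (C : ℝ) (hC : 0 < C)
    (a : Fin n → ℝ) (ha : ∀ i, 0 < a i) (z : Fin n → ℂ) (hz : ∀ i, 0 < (z i).re) :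
    mellinT n (fun x => Real.exp (-cesCost n α C a x)) z =
        Gamma (∑ i, z i) / ((α : ℂ) ^ (n - 1) * (C : ℂ) ^ (∑ i, z i) * Gamma ((∑ i, z i) / α)) *
          ∏ j, (a j : ℂ) ^ (-z j / α) * Gamma (z j / α) ∧
      mellinT n (fun x => Real.exp (-cesCost n α C a x)) z ≠ 0 := by
  have : NeZero n := ⟨hn⟩
  have hα' : (α : ℂ) ≠ 0 := ofReal_ne_zero.2 hα.ne'
  have hC' : (C : ℂ) ^ (∑ i, z i) ≠ 0 := cpow_ne_zero_iff.2 (.inl (ofReal_ne_zero.2 hC.ne'))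
  have h_Gamma_div {w : ℂ} (hw : 0 < w.re) : Gamma (w / α) ≠ 0 :=
    Gamma_ne_zero_of_re_pos (by rw [div_ofReal_re]; positivity)
  have h_mul := mellinT_exp_neg_cesCost_mul_Gamma hα hC ha hz
  have hs := re_sum_pos hz
  have h_eq : mellinT n (fun x => Real.exp (-cesCost n α C a x)) z =
      Gamma (∑ i, z i) / ((α : ℂ) ^ (n - 1) * (C : ℂ) ^ (∑ i, z i) * Gamma ((∑ i, z i) / α)) *
        ∏ j, (a j : ℂ) ^ (-z j / α) * Gamma (z j / α) := by
    have h_Gamma_sum := h_Gamma_div hs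
    rw [← pow_sub_one_mul hn, cpow_neg, inv_pow] at h_mul
    field_simp at h_mul ⊢
    linear_combination h_mul
  refine ⟨h_eq, h_eq ▸ mul_ne_zero (div_ne_zero (Gamma_ne_zero_of_re_pos hs) ?_) ?_⟩
  · exact mul_ne_zero (mul_ne_zero (pow_ne_zero _ hα') hC') (h_Gamma_div hs)
  · exact Finset.prod_ne_zero_iff.2 fun j _ => mul_ne_zero
      (cpow_ne_zero_iff.2 (.inl (ofReal_ne_zero.2 (ha j).ne'))) (h_Gamma_div (hz j))

/-- Mellin transform of `e^{-q_α}` for the CES cost function: for `Re z ∈ ℝ^n_+`,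
writing `s = z₁ + ⋯ + zₙ`,
`(M e^{-q_α})(z) = Γ(s) / (α^{n-1} C^s Γ(s/α)) ∏ⱼ aⱼ^{-zⱼ/α} Γ(zⱼ/α)`;
in particular `(M e^{-q_α})(z) ≠ 0`. -/
theorem mellin_ces_eq
    (n : ℕ) (hn : 2 ≤ n) (α : ℝ) (hα : α ∈ Ioc (0 : ℝ) 1
    ) (C : ℝ) (hC : 0 < C) (a : Fin n → ℝ) (ha : ∀ i, 0 < a i)
    (hsum : ∑ i, a i = 1) :
    ∀ z : Fin n → ℂ, (∀ i, 0 < (z i).re) →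
      (mellinT n (fun x => Real.exp (-cesCost n α C a x)) z =
          Complex.Gamma (∑ i, z i) /
              ((α : ℂ) ^ (n - 1) * (C : ℂ) ^ (∑ i, z i) *
                Complex.Gamma ((∑ i, z i) / (α : ℂ))) *
            ∏ j, (a j : ℂ) ^ (-(z j) / (α : ℂ)) * Complex.Gamma (z j / (α : ℂ))) ∧
        mellinT n (fun x => Real.exp (-cesCost n α C a x)) z ≠ 0 := by
  intro z hz
  exact mellin_ces_eq_general n (by omega) α hα.1 C hC a ha z hz
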